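/- arXiv:1604.06315 — 2 statements merged into one kernel-verified Lean document; each statement's English description precedes it below -/
import Mathlib

section
/- Let ψ : M² → L⁴ be a spacelike immersion through the lightcone Λ. If the time-coordinate function ψ₀ = x₀∘ψ attains a local maximum at p₀ ∈ M², then II_η is positive definite at p₀ (and in a neighborhood of p₀). In particular, if M² is compact and η is non-degenerate, then II_η is a Riemannian metric on all of M². -/
/-- The Lorentz–Minkowski inner product on `ℝ⁴`, signature `(-,+,+,+)`. -/
def mink (u v : Fin 4 → ℝ) : ℝ := -(u 0 * v 0) + u 1 * v 1 + u 2 * v 2 + u 3 * v 3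

lemma mink_comm' (u v : Fin 4 → ℝ) : mink u v = mink v u := by
  unfold mink; ring

lemma mink_add_left (u v w : Fin 4 → ℝ) : mink (u + v) w = mink u w + mink v w := by
  simp only [mink, Pi.add_apply]; ring

lemma mink_smul_left (a : ℝ) (u w : Fin 4 → ℝ) : mink (a • u) w = a * mink u w := by
  simp only [mink, Pi.smul_apply, smul_eq_mul]; ring

lemma mink_neg_left (u w : Fin 4 → ℝ) : mink (-u) w = - mink u w := by
  simp only [mink, Pi.neg_apply]; ring

lemma mink_add_right (u v w : Fin 4 → ℝ) : mink w (u + v) = mink w u + mink w v := by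
  simp only [mink, Pi.add_apply]; ring

lemma mink_smul_right (a : ℝ) (u w : Fin 4 → ℝ) : mink w (a • u) = a * mink w u := by
  simp only [mink, Pi.smul_apply, smul_eq_mul]; ring

lemma line_hasDerivAt {F : Type*} [NormedAddCommGroup F] [NormedSpace ℝ F]
    (f : ℝ × ℝ → F) (hf : Differentiable ℝ f) (p u : ℝ × ℝ) (t : ℝ) :
    HasDerivAt (fun s : ℝ => f (p + s • u)) (fderiv ℝ f (p + t • u) u) t := by
  have h1 : HasDerivAt (fun s : ℝ => p + s • u) u t := by
    simpa using ((hasDerivAt_id t).smul_const u).const_add p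
  exact (hf (p + t • u)).hasFDerivAt.comp_hasDerivAt t h1

lemma mink_deriv (f h : ℝ × ℝ → Fin 4 → ℝ) (hf : Differentiable ℝ f) (hh : Differentiable ℝ h)
    (c : ℝ) (hc : ∀ q, mink (f q) (h q) = c) (p u : ℝ × ℝ) :
    mink (fderiv ℝ f p u) (h p) + mink (f p) (fderiv ℝ h p u) = 0 := by
  have hF := line_hasDerivAt f hf p u 0
  have hH := line_hasDerivAt h hh p u 0
  simp only [zero_smul, add_zero] at hF hH
  rw [hasDerivAt_pi] at hF hH
  have e : ∀ i, HasDerivAt (fun s : ℝ => f (p + s • u) i * h (p + s • u) i)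
      (fderiv ℝ f p u i * h p i + f p i * fderiv ℝ h p u i) 0 := by
    intro i
    have := (hF i).mul (hH i)
    simp only [zero_smul, add_zero] at this
    exact this
  have H := (((e 0).neg.add (e 1)).add (e 2)).add (e 3)
  have H2 : HasDerivAt (fun _ : ℝ => c) 0 0 := hasDerivAt_const _ _
  have H3 := H.unique (H2.congr_of_eventuallyEq (Filter.Eventually.of_forall fun s => by
    simpa [mink] using hc (p + s • u)))
  unfold mink
  linarith

lemma second_test (f f' : ℝ → ℝ) (c : ℝ) (h1 : ∀ t, HasDerivAt f (f' t) t)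
    (h2 : HasDerivAt f' c 0) (hm : IsLocalMax f 0) : c ≤ 0 := by
  by_contra hc
  push Not at hc
  have hd : deriv f = f' := funext fun t => (h1 t).deriv
  have h0 : f' 0 = 0 := by rw [← hd]; exact hm.deriv_eq_zero
  have hmin : IsLocalMin f 0 := by
    apply isLocalMin_of_deriv_deriv_pos
    · rw [hd, h2.deriv]; exact hc
    · rw [hd, h0]
    · exact (h1 0).continuousAt
  have hconst : f =ᶠ[nhds 0] fun _ => f 0 := by
    filter_upwards [hm, hmin] with t a b using le_antisymm a b
  have hd1 := hconst.deriv
  rw [hd] at hd1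
  have : HasDerivAt f' 0 0 := by
    have h3 : HasDerivAt (fun _ : ℝ => (0:ℝ)) 0 0 := hasDerivAt_const _ _
    refine h3.congr_of_eventuallyEq ?_
    filter_upwards [hd1] with t ht
    simpa using ht
  have := this.unique h2
  linarith

lemma posdef_of {E F G a b : ℝ} (hE : 0 < E) (hD : 0 < E * G - F * F) (h : ¬ (a = 0 ∧ b = 0)) :
    0 < a * a * E + 2 * a * b * F + b * b * G := by
  have key : E * (a * a * E + 2 * a * b * F + b * b * G)
      = (a * E + b * F) ^ 2 + b ^ 2 * (E * G - F * F) := by ring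
  have : 0 < E * (a * a * E + 2 * a * b * F + b * b * G) := by
    rw [key]
    by_cases hb : b = 0
    · have ha : a ≠ 0 := fun ha => h ⟨ha, hb⟩
      subst hb
      have : a * E ≠ 0 := mul_ne_zero ha hE.ne'
      have := pow_pos (abs_pos.mpr this) 2
      rw [sq_abs] at this
      simpa using this
    · have := pow_pos (abs_pos.mpr hb) 2
      rw [sq_abs] at this
      have := mul_pos this hD
      positivity
  exact (mul_pos_iff_of_pos_left hE).mp this

lemma pos_of_ne_zero_conn (f : ℝ × ℝ → ℝ) (hf : Continuous f) (h0 : ∀ p, f p ≠ 0)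
    (p₀ : ℝ × ℝ) (hp : 0 < f p₀) (p : ℝ × ℝ) : 0 < f p := by
  by_contra hc
  push Not at hc
  obtain ⟨q, hq⟩ := mem_range_of_exists_le_of_exists_ge hf ⟨p, hc⟩ ⟨p₀, hp.le⟩
  exact h0 q hq

/-- Let `ψ` be a spacelike immersion through the lightcone `Λ`, with lightlike
normal `η`, `⟨ψ,η⟩ = 1`, and Weingarten field `A = A_η`; `II_η(u,v) = -⟨dψ(A u), dψ(v)⟩`.
If the time-coordinate `ψ₀` attains a local maximum at `p₀`, then `II_η` is positive
definite at `p₀` and in a neighborhood of `p₀`. In particular, if `ψ₀` attains a (global)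
maximum (as happens when the surface is compact) and `η` is non-degenerate
(`det A ≠ 0` everywhere), then `II_η` is positive definite everywhere, i.e. Riemannian. -/
theorem stmt15
    (ψ η : ℝ × ℝ → Fin 4 → ℝ)
    (A : ℝ × ℝ → (ℝ × ℝ →ₗ[ℝ] ℝ × ℝ))
    (hψ : ContDiff ℝ (⊤ : ℕ∞) ψ) (hη : ContDiff ℝ (⊤ : ℕ∞) η)
    (hcone : ∀ p, mink (ψ p) (ψ p) = 0 ∧ 0 < ψ p 0)
    (hspace : ∀ p v, v ≠ 0 → 0 < mink (fderiv ℝ ψ p v) (fderiv ℝ ψ p v))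
    (hηlight : ∀ p, mink (η p) (η p) = 0)
    (hψη : ∀ p, mink (ψ p) (η p) = 1)
    (hηnormal : ∀ p v, mink (η p) (fderiv ℝ ψ p v) = 0)
    (hWein : ∀ p v, fderiv ℝ η p v = -(fderiv ℝ ψ p (A p v)))
    (II : ℝ × ℝ → (ℝ × ℝ) → (ℝ × ℝ) → ℝ)
    (hII : ∀ p u v, II p u v = -(mink (fderiv ℝ ψ p (A p u)) (fderiv ℝ ψ p v))) :
    (∀ p₀ : ℝ × ℝ, IsLocalMax (fun q => ψ q 0) p₀ →
      ∀ᶠ p in nhds p₀, ∀ v, v ≠ 0 → 0 < II p v v) ∧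
    ((∃ p₀, ∀ p, ψ p 0 ≤ ψ p₀ 0) → (∀ p, LinearMap.det (A p) ≠ 0) →
      ∀ p v, v ≠ 0 → 0 < II p v v) := by
  have dψ : Differentiable ℝ ψ := hψ.differentiable (by simp)
  have dη : Differentiable ℝ η := hη.differentiable (by simp)
  have two_le : (2 : WithTop ℕ∞) ≤ ((⊤ : ℕ∞) : WithTop ℕ∞) :=
    WithTop.coe_le_coe.mpr (le_top : (2 : ℕ∞) ≤ ⊤)
  have cdψ : ContDiff ℝ 1 (fderiv ℝ ψ) := hψ.fderiv_right (by rw [one_add_one_eq_two]; exact two_le)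
  have cψ' : Continuous (fderiv ℝ ψ) := cdψ.continuous
  have cη' : Continuous (fderiv ℝ η) := hη.continuous_fderiv (by simp)
  have ddψ : Differentiable ℝ (fderiv ℝ ψ) := cdψ.differentiable (by simp)
  have dW : ∀ v, Differentiable ℝ (fun q => fderiv ℝ ψ q v) := fun v q =>
    (ddψ q).clm_apply (differentiableAt_const v)
  have fW : ∀ p u v, fderiv ℝ (fun q => fderiv ℝ ψ q v) p u = fderiv ℝ (fderiv ℝ ψ) p u v := by
    intro p u v
    rw [fderiv_clm_apply (ddψ p) (differentiableAt_const v)]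
    simp
  have hII' : ∀ p u v, II p u v = mink (fderiv ℝ η p u) (fderiv ℝ ψ p v) := by
    intro p u v
    rw [hII, hWein, mink_neg_left]
  have hIIX : ∀ p u v, II p u v = - mink (η p) (fderiv ℝ (fderiv ℝ ψ) p u v) := by
    intro p u v
    have := mink_deriv η (fun q => fderiv ℝ ψ q v) dη (dW v) 0 (fun q => hηnormal q v) p u
    rw [fW] at this
    rw [hII']; linarith
  have hsymm : ∀ p u v, II p u v = II p v u := by
    intro p u v
    rw [hIIX, hIIX]
    have : IsSymmSndFDerivAt ℝ ψ p := hψ.contDiffAt.isSymmSndFDerivAt (by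
      simp only [minSmoothness_of_isRCLikeNormedField]; exact two_le)
    rw [this u v]
  have hψW : ∀ p v, mink (ψ p) (fderiv ℝ ψ p v) = 0 := by
    intro p v
    have := mink_deriv ψ ψ dψ dψ 0 (fun q => (hcone q).1) p v
    rw [mink_comm' (fderiv ℝ ψ p v)] at this
    linarith
  have hψX : ∀ p u v, mink (ψ p) (fderiv ℝ (fderiv ℝ ψ) p u v)
      = - mink (fderiv ℝ ψ p u) (fderiv ℝ ψ p v) := by
    intro p u v
    have := mink_deriv ψ (fun q => fderiv ℝ ψ q v) dψ (dW v) 0 (fun q => hψW q v) p u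
    rw [fW] at this
    linarith
  have hcont : ∀ u v, Continuous (fun p => II p u v) := by
    intro u v
    have h1 : Continuous (fun p => fderiv ℝ η p u) := cη'.clm_apply continuous_const
    have h2 : Continuous (fun p => fderiv ℝ ψ p v) := cψ'.clm_apply continuous_const
    have h1' := fun i => (continuous_apply i).comp h1
    have h2' := fun i => (continuous_apply i).comp h2
    simp only [hII', mink]
    exact ((((h1' 0).mul (h2' 0)).neg.add ((h1' 1).mul (h2' 1))).add
      ((h1' 2).mul (h2' 2))).add ((h1' 3).mul (h2' 3))
  have hmax : ∀ p₀ : ℝ × ℝ, IsLocalMax (fun q => ψ q 0) p₀ → ∀ v, v ≠ 0 → 0 < II p₀ v v := by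
    intro p₀ hm v hv
    -- the line through `p₀`
    have hl1 : ∀ u t, HasDerivAt (fun s : ℝ => ψ (p₀ + s • u) 0)
        (fderiv ℝ ψ (p₀ + t • u) u 0) t := fun u t =>
      (hasDerivAt_pi.mp (line_hasDerivAt ψ dψ p₀ u t)) 0
    have hlm : ∀ u : ℝ × ℝ, IsLocalMax (fun s : ℝ => ψ (p₀ + s • u) 0) 0 := by
      intro u
      have hc : Filter.Tendsto (fun s : ℝ => p₀ + s • u) (nhds 0) (nhds p₀) := by
        have : Continuous (fun s : ℝ => p₀ + s • u) := by fun_prop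
        simpa using this.tendsto 0
      have := hc.eventually hm
      simpa [IsLocalMax, IsMaxFilter] using this
    have hW0 : ∀ u, fderiv ℝ ψ p₀ u 0 = 0 := by
      intro u
      have := (hlm u).hasDerivAt_eq_zero (hl1 u 0)
      simpa using this
    have hX0 : fderiv ℝ (fderiv ℝ ψ) p₀ v v 0 ≤ 0 := by
      refine second_test _ _ _ (hl1 v) ?_ (hlm v)
      have := (hasDerivAt_pi.mp (line_hasDerivAt _ (dW v) p₀ v 0)) 0
      rw [fW] at this
      simpa using this
    -- decomposition of the time direction
    let T : (ℝ × ℝ × (ℝ × ℝ)) →ₗ[ℝ] (Fin 4 → ℝ) :=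
      { toFun := fun x => x.1 • ψ p₀ + x.2.1 • η p₀ + fderiv ℝ ψ p₀ x.2.2
        map_add' := by
          intro x y
          simp only [Prod.fst_add, Prod.snd_add, map_add, add_smul]
          abel
        map_smul' := by
          intro c x
          simp only [Prod.smul_fst, Prod.smul_snd, map_smul, smul_eq_mul, mul_smul, smul_add,
            RingHom.id_apply] }
    have hT : ∀ a b w, T (a, b, w) = a • ψ p₀ + b • η p₀ + fderiv ℝ ψ p₀ w := fun _ _ _ => rfl
    have pψ : ∀ a b w, mink (ψ p₀) (T (a, b, w)) = b := by
      intro a b w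
      rw [hT, mink_add_right, mink_add_right, mink_smul_right, mink_smul_right, hψη, hψW,
        (hcone p₀).1]
      ring
    have pη : ∀ a b w, mink (η p₀) (T (a, b, w)) = a := by
      intro a b w
      rw [hT, mink_add_right, mink_add_right, mink_smul_right, mink_smul_right,
        mink_comm' (η p₀) (ψ p₀), hψη, hηlight, hηnormal]
      ring
    have pW : ∀ a b w u, mink (fderiv ℝ ψ p₀ u) (T (a, b, w))
        = mink (fderiv ℝ ψ p₀ u) (fderiv ℝ ψ p₀ w) := by
      intro a b w u
      rw [hT, mink_add_right, mink_add_right, mink_smul_right, mink_smul_right,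
        mink_comm' _ (ψ p₀), mink_comm' _ (η p₀), hψW, hηnormal]
      ring
    have mz : ∀ u, mink u 0 = 0 := by intro u; simp [mink]
    have hinj : Function.Injective T := by
      rw [← LinearMap.ker_eq_bot, LinearMap.ker_eq_bot']
      rintro ⟨a, b, w⟩ h
      have h1 := pψ a b w
      have h2 := pη a b w
      have h3 := pW a b w w
      rw [h, mz] at h1 h2 h3
      have hw : w = 0 := by
        by_contra hw
        exact (hspace p₀ w hw).ne h3
      rw [← h1, ← h2, hw]; rfl
    have hsurj : Function.Surjective T := by
      refine (LinearMap.injective_iff_surjective_of_finrank_eq_finrank ?_).mp hinj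
      simp
    obtain ⟨⟨a, b, w⟩, he⟩ := hsurj (Pi.single 0 1)
    have me : ∀ u, mink u (Pi.single 0 1) = - u 0 := by intro u; simp [mink]
    have h1 := pψ a b w
    have h2 := pη a b w
    have h3 := pW a b w w
    rw [he, me] at h1 h2 h3
    have hw : w = 0 := by
      by_contra hw
      have := hspace p₀ w hw
      rw [hW0] at h3
      linarith
    subst hw
    rw [hT, map_zero, add_zero] at he
    have hpos := (hcone p₀).2
    have h4 := congrFun he 0
    simp only [Pi.add_apply, Pi.smul_apply, smul_eq_mul, Pi.single_eq_same] at h4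
    have ha : 0 < a := by
      by_contra hn
      push Not at hn
      nlinarith [mul_nonneg (neg_nonneg.mpr hn) hpos.le]
    have h5 := me (fderiv ℝ (fderiv ℝ ψ) p₀ v v)
    rw [← he, mink_add_right, mink_smul_right, mink_smul_right, mink_comm' _ (ψ p₀),
      mink_comm' _ (η p₀), hψX] at h5
    have h6 := hIIX p₀ v v
    have hg := mul_pos ha (hspace p₀ v hv)
    have : 0 < ψ p₀ 0 * II p₀ v v := by
      rw [h6]
      rw [← h1] at h5
      linarith
    exact (mul_pos_iff_of_pos_left hpos).mp this
  -- coordinates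
  have hquad : ∀ p (u v : ℝ × ℝ), II p u v = u.1 * II p (1, 0) v + u.2 * II p (0, 1) v := by
    intro p u v
    have hu : u = u.1 • ((1, 0) : ℝ × ℝ) + u.2 • ((0, 1) : ℝ × ℝ) := by ext <;> simp
    conv_lhs => rw [hu]
    simp only [hII', map_add, map_smul, mink_add_left, mink_smul_left]
  have hexp : ∀ p (v : ℝ × ℝ), II p v v = v.1 * v.1 * II p (1, 0) (1, 0)
      + 2 * v.1 * v.2 * II p (1, 0) (0, 1) + v.2 * v.2 * II p (0, 1) (0, 1) := by
    intro p v
    rw [hquad p v v, hsymm p (1, 0) v, hsymm p (0, 1) v, hquad p v (1, 0), hquad p v (0, 1),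
      hsymm p (0, 1) (1, 0)]
    ring
  let D : ℝ × ℝ → ℝ := fun p => II p (1, 0) (1, 0) * II p (0, 1) (0, 1)
    - II p (1, 0) (0, 1) * II p (1, 0) (0, 1)
  have hDc : Continuous D :=
    ((hcont _ _).mul (hcont _ _)).sub ((hcont _ _).mul (hcont _ _))
  have hpd : ∀ p, 0 < II p (1, 0) (1, 0) → 0 < D p → ∀ v, v ≠ 0 → 0 < II p v v := by
    intro p hE hD v hv
    rw [hexp]
    exact posdef_of hE hD fun h => hv (Prod.ext h.1 h.2)
  have hdp : ∀ p, (∀ v, v ≠ 0 → 0 < II p v v) → 0 < II p (1, 0) (1, 0) ∧ 0 < D p := by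
    intro p h
    have hE := h (1, 0) (by simp)
    refine ⟨hE, ?_⟩
    have := h (- II p (1, 0) (0, 1), II p (1, 0) (1, 0)) (by
      intro h; exact hE.ne' (congrArg Prod.snd h))
    rw [hexp] at this
    have h2 : 0 < II p (1, 0) (1, 0) * D p := by
      simp only [D] at *
      linarith
    exact (mul_pos_iff_of_pos_left hE).mp h2
  refine ⟨?_, ?_⟩
  · intro p₀ hm
    obtain ⟨hE, hD⟩ := hdp p₀ (hmax p₀ hm)
    filter_upwards [(hcont (1, 0) (1, 0)).continuousAt.eventually (lt_mem_nhds hE),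
      hDc.continuousAt.eventually (lt_mem_nhds hD)] with p h1 h2 using hpd p h1 h2
  · rintro ⟨p₀, hm⟩ hdet
    obtain ⟨hE, hD⟩ := hdp p₀ (hmax p₀ (Filter.Eventually.of_forall hm))
    have hker : ∀ p (v : ℝ × ℝ), II p v (1, 0) = 0 → II p v (0, 1) = 0 → v = 0 := by
      intro p v h1 h2
      have h3 : II p v (A p v) = 0 := by
        rw [hsymm, hquad, hsymm p (1, 0), hsymm p (0, 1), h1, h2]; simp
      rw [hII] at h3
      have h4 : A p v = 0 := by
        by_contra hn
        have := hspace p _ hn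
        linarith
      by_contra hv
      exact hdet p (LinearMap.det_eq_zero_iff_ker_ne_bot.mpr
        fun hb => hv (LinearMap.ker_eq_bot'.mp hb v h4))
    have hD0 : ∀ p, D p ≠ 0 := by
      intro p h0
      simp only [D] at h0
      have hv := hker p (II p (1, 0) (0, 1), - II p (1, 0) (1, 0))
        (by rw [hquad, hsymm p (0, 1) (1, 0)]; ring) (by rw [hquad]; linarith)
      have hF : II p (1, 0) (0, 1) = 0 := congrArg Prod.fst hv
      have hE : II p (1, 0) (1, 0) = 0 := neg_eq_zero.mp (congrArg Prod.snd hv)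
      have := hker p (1, 0) hE hF
      simp at this
    have hDp := pos_of_ne_zero_conn D hDc hD0 p₀ hD
    have hEp := pos_of_ne_zero_conn _ (hcont (1, 0) (1, 0)) (by
      intro p h
      have := hDp p
      simp only [D] at this
      rw [h] at this
      nlinarith [mul_self_nonneg (II p (1, 0) (0, 1))]) p₀ hE
    exact fun p => hpd p (hEp p) (hDp p)
end

section
/- Let ψ : M² → L⁴ be a spacelike immersion through the lightcone such that II_η is a Riemannian metric, K and K^η the Gauss curvatures of the induced metric and of II_η respectively, d = det(A_η), and L the difference tensor. Then 2K^η = K²/d + II_η(L,L) - (1/(4d²))·II_η(∇^{II_η}d, ∇^{II_η}d). -/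
/-- Partial derivative in the first chart direction. -/
noncomputable def pd1 (f : ℝ × ℝ → ℝ) (p : ℝ × ℝ) : ℝ := fderiv ℝ f p (1, 0)

/-- Partial derivative in the second chart direction. -/
noncomputable def pd2 (f : ℝ × ℝ → ℝ) (p : ℝ × ℝ) : ℝ := fderiv ℝ f p (0, 1)

/-- The Gauss curvature of the metric `E dx² + 2F dx dy + G dy²` via the Brioschi formula. -/
noncomputable def brioschi (E F G : ℝ × ℝ → ℝ) (p : ℝ × ℝ) : ℝ :=
  (Matrix.det !![-(1 / 2) * pd2 (pd2 E) p + pd1 (pd2 F) p - (1 / 2) * pd1 (pd1 G) p,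
      (1 / 2) * pd1 E p, pd1 F p - (1 / 2) * pd2 E p;
      pd2 F p - (1 / 2) * pd1 G p, E p, F p;
      (1 / 2) * pd2 G p, F p, G p] -
    Matrix.det !![0, (1 / 2) * pd2 E p, (1 / 2) * pd1 G p;
      (1 / 2) * pd2 E p, E p, F p;
      (1 / 2) * pd1 G p, F p, G p]) / (E p * G p - F p ^ 2) ^ 2

/-- `Γ` is the Levi-Civita connection (Christoffel field, in the chart) of the metric `G`. -/
def IsLeviCivita (G : ℝ × ℝ → (ℝ × ℝ) → (ℝ × ℝ) → ℝ)
    (Γ : ℝ × ℝ → (ℝ × ℝ) → (ℝ × ℝ) → ℝ × ℝ) : Prop :=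
  (∀ p u v, Γ p u v = Γ p v u) ∧
  (∀ p u v w, Γ p (u + v) w = Γ p u w + Γ p v w) ∧
  (∀ p (c : ℝ) u w, Γ p (c • u) w = c • Γ p u w) ∧
  (∀ p u v w, fderiv ℝ (fun q => G q u v) p w = G p (Γ p w u) v + G p u (Γ p w v))

/-- The chart basis of `ℝ²`. -/
def bse : Fin 2 → ℝ × ℝ := ![(1, 0), (0, 1)]


lemma mink_add' (u v w : Fin 4 → ℝ) : mink u (v + w) = mink u v + mink u w := by
  simp only [mink, Pi.add_apply]; ring

lemma mink_smul' (c : ℝ) (u v : Fin 4 → ℝ) : mink u (c • v) = c * mink u v := by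
  simp only [mink, Pi.smul_apply, smul_eq_mul]; ring

lemma mink_neg' (u v : Fin 4 → ℝ) : mink u (-v) = - mink u v := by
  simp only [mink, Pi.neg_apply]; ring

lemma mink_sub' (u v w : Fin 4 → ℝ) : mink u (v - w) = mink u v - mink u w := by
  simp only [mink, Pi.sub_apply]; ring

/-- Nondegeneracy of the frame. -/
lemma mink_frame (u v s t : Fin 4 → ℝ) (E F G : ℝ) (hE : mink u u = E) (hF : mink u v = F)
    (hG : mink v v = G) (hD : E * G - F ^ 2 ≠ 0)
    (hss : mink s s = 0) (hst : mink s t = 1) (htt : mink t t = 0)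
    (hsu : mink s u = 0) (hsv : mink s v = 0) (htu : mink t u = 0) (htv : mink t v = 0)
    (w : Fin 4 → ℝ) (h1 : mink u w = 0) (h2 : mink v w = 0) (h3 : mink s w = 0)
    (h4 : mink t w = 0) : w = 0 := by
  let M : Matrix (Fin 4) (Fin 4) ℝ := Matrix.of ![u, v, s, t]
  let J : Matrix (Fin 4) (Fin 4) ℝ := Matrix.diagonal ![-1, 1, 1, 1]
  have hent : ∀ (M : Matrix (Fin 4) (Fin 4) ℝ) i j,
      (M * J * M.transpose) i j = mink (M i) (M j) := by
    intro M i j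
    simp [J, Matrix.mul_apply, Matrix.mul_diagonal, Fin.sum_univ_four, mink]
  have hgram : M * J * M.transpose = !![E, F, 0, 0; F, G, 0, 0; 0, 0, 0, 1; 0, 0, 1, 0] := by
    have m0 : M 0 = u := rfl
    have m1 : M 1 = v := rfl
    have m2 : M 2 = s := rfl
    have m3 : M 3 = t := rfl
    ext i j
    rw [hent]
    clear_value M
    fin_cases i <;> fin_cases j <;>
      simp [m0, m1, m2, m3, hE, hF, hG, hss, hst, htt, hsu, hsv, htu, htv, mink_comm' v u,
        mink_comm' u s, mink_comm' u t, mink_comm' v s, mink_comm' v t, mink_comm' t s]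
  have hdet : (M * J * M.transpose).det ≠ 0 := by
    rw [hgram]
    simp [Matrix.det_succ_row_zero, Fin.sum_univ_succ, Fin.succAbove]
    intro h
    apply hD
    linarith
  have hMJ : (M * J).det ≠ 0 := by
    rw [Matrix.det_mul] at hdet
    exact left_ne_zero_of_mul hdet
  apply Matrix.eq_zero_of_mulVec_eq_zero hMJ
  ext i
  fin_cases i <;>
    simp [M, J, Matrix.mulVec, dotProduct, Fin.sum_univ_four, Matrix.mul_apply,
      Matrix.diagonal_apply] <;>
    simp only [mink] at h1 h2 h3 h4 <;> linarith

lemma fderiv_mink (f h : ℝ × ℝ → Fin 4 → ℝ) (hf : Differentiable ℝ f) (hh : Differentiable ℝ h)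
    (p v : ℝ × ℝ) : fderiv ℝ (fun q => mink (f q) (h q)) p v =
      mink (fderiv ℝ f p v) (h p) + mink (f p) (fderiv ℝ h p v) := by
  have hf' : ∀ i, HasFDerivAt (fun q => f q i)
      ((ContinuousLinearMap.proj i).comp (fderiv ℝ f p)) p := fun i =>
    (hasFDerivAt_pi'.1 (hf p).hasFDerivAt) i
  have hh' : ∀ i, HasFDerivAt (fun q => h q i)
      ((ContinuousLinearMap.proj i).comp (fderiv ℝ h p)) p := fun i =>
    (hasFDerivAt_pi'.1 (hh p).hasFDerivAt) i
  have := ((((hf' 0).mul (hh' 0)).neg.add ((hf' 1).mul (hh' 1))).add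
    ((hf' 2).mul (hh' 2))).add ((hf' 3).mul (hh' 3))
  have h2 : fderiv ℝ (fun q => mink (f q) (h q)) p = _ := this.fderiv
  rw [h2]
  simp [mink]
  ring

lemma smooth_dir (f : ℝ × ℝ → Fin 4 → ℝ) (hf : ContDiff ℝ (⊤ : ℕ∞) f) (v : ℝ × ℝ) :
    ContDiff ℝ (⊤ : ℕ∞) (fun q => fderiv ℝ f q v) :=
  (hf.fderiv_right (m := (⊤ : ℕ∞)) (by simp)).clm_apply contDiff_const

lemma dir_symm (f : ℝ × ℝ → Fin 4 → ℝ) (hf : ContDiff ℝ (⊤ : ℕ∞) f) (u v : ℝ × ℝ) (p : ℝ × ℝ) :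
    fderiv ℝ (fun q => fderiv ℝ f q u) p v = fderiv ℝ (fun q => fderiv ℝ f q v) p u := by
  have hd : DifferentiableAt ℝ (fderiv ℝ f) p :=
    ((hf.fderiv_right (m := (⊤ : ℕ∞)) (by simp)).differentiable (by simp)) p
  have hs : IsSymmSndFDerivAt ℝ f p :=
    (hf.contDiffAt).isSymmSndFDerivAt (by simp; exact WithTop.coe_le_coe.2 (le_top : (2 : ℕ∞) ≤ ⊤))
  rw [fderiv_clm_apply hd (by fun_prop), fderiv_clm_apply hd (by fun_prop)]
  simp
  exact hs v u

lemma smooth_mink (f h : ℝ × ℝ → Fin 4 → ℝ) (hf : ContDiff ℝ (⊤ : ℕ∞) f)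
    (hh : ContDiff ℝ (⊤ : ℕ∞) h) : ContDiff ℝ (⊤ : ℕ∞) (fun q => mink (f q) (h q)) := by
  have a := fun i => contDiff_pi.1 hf i
  have b := fun i => contDiff_pi.1 hh i
  unfold mink
  exact ((((a 0).mul (b 0)).neg.add ((a 1).mul (b 1))).add ((a 2).mul (b 2))).add
    ((a 3).mul (b 3))

lemma brioschi_alg (E F G N Ex Ey Fx Fy Gx Gy x1 x2 y1 y2 z1 z2 : ℝ)
    (hEx : Ex = 2 * (x1 * E + x2 * F)) (hEy : Ey = 2 * (y1 * E + y2 * F))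
    (hFx : Fx = x1 * F + x2 * G + (y1 * E + y2 * F))
    (hFy : Fy = y1 * F + y2 * G + (z1 * E + z2 * F))
    (hGx : Gx = 2 * (y1 * F + y2 * G)) (hGy : Gy = 2 * (z1 * F + z2 * G))
    (hD : E * G - F ^ 2 ≠ 0) :
    (Matrix.det !![N, (1 / 2) * Ex, Fx - (1 / 2) * Ey;
      Fy - (1 / 2) * Gx, E, F;
      (1 / 2) * Gy, F, G] -
    Matrix.det !![0, (1 / 2) * Ey, (1 / 2) * Gx;
      (1 / 2) * Ey, E, F;
      (1 / 2) * Gx, F, G]) / (E * G - F ^ 2) ^ 2 =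
    (N - (x1 * z1 * E + (x1 * z2 + x2 * z1) * F + x2 * z2 * G
      - (y1 * y1 * E + 2 * y1 * y2 * F + y2 * y2 * G))) / (E * G - F ^ 2) := by
  rw [div_eq_div_iff (pow_ne_zero 2 hD) hD]
  simp only [Matrix.det_fin_three, Matrix.of_apply, Matrix.cons_val', Matrix.cons_val_zero,
    Matrix.cons_val_one, Matrix.cons_val]
  subst hEx hEy hFx hFy hGx hGy
  ring

lemma final_alg (e f h p1 p2 q1 q2 r1 r2 : ℝ) (he : e ≠ 0) (hD : e * h - f ^ 2 ≠ 0)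
    (c1 : p1 * f + p2 * h = q1 * e + q2 * f) (c2 : q1 * f + q2 * h = r1 * e + r2 * f) :
    2 * ((q1 * q1 * e + 2 * q1 * q2 * f + q2 * q2 * h)
      - (p1 * r1 * e + (p1 * r2 + p2 * r1) * f + p2 * r2 * h)) * (e * h - f ^ 2)
    = (h * h * (p1 * p1 * e + 2 * p1 * p2 * f + p2 * p2 * h)
      + 2 * (f * f + e * h) * (q1 * q1 * e + 2 * q1 * q2 * f + q2 * q2 * h)
      + e * e * (r1 * r1 * e + 2 * r1 * r2 * f + r2 * r2 * h)
      - 4 * h * f * (p1 * q1 * e + (p1 * q2 + p2 * q1) * f + p2 * q2 * h)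
      + 2 * f * f * (p1 * r1 * e + (p1 * r2 + p2 * r1) * f + p2 * r2 * h)
      - 4 * f * e * (q1 * r1 * e + (q1 * r2 + q2 * r1) * f + q2 * r2 * h))
      - (e * h - f ^ 2) * (h * (p1 + q2) ^ 2 - 2 * f * (p1 + q2) * (q1 + r2)
        + e * (q1 + r2) ^ 2) := by
  have hq : q1 = (p1 * f + p2 * h - q2 * f) / e := by field_simp; linarith
  have hr : r1 = (q1 * f + q2 * h - r2 * f) / e := by field_simp; linarith
  rw [hr, hq]
  field_simp
  ring

lemma fderiv2_mink (f h : ℝ × ℝ → Fin 4 → ℝ) (hf : ContDiff ℝ (⊤ : ℕ∞) f)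
    (hh : ContDiff ℝ (⊤ : ℕ∞) h) (p u v : ℝ × ℝ) :
    fderiv ℝ (fun q => fderiv ℝ (fun r => mink (f r) (h r)) q u) p v =
      mink (fderiv ℝ (fun q => fderiv ℝ f q u) p v) (h p)
      + mink (fderiv ℝ f p u) (fderiv ℝ h p v)
      + (mink (fderiv ℝ f p v) (fderiv ℝ h p u)
      + mink (f p) (fderiv ℝ (fun q => fderiv ℝ h q u) p v)) := by
  have h1 : (fun q => fderiv ℝ (fun r => mink (f r) (h r)) q u) =
      fun q => mink (fderiv ℝ f q u) (h q) + mink (f q) (fderiv ℝ h q u) := by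
    funext q
    exact fderiv_mink f h (hf.differentiable (by simp)) (hh.differentiable (by simp)) q u
  have fu := smooth_dir f hf u
  have hu := smooth_dir h hh u
  rw [h1, fderiv_fun_add ((smooth_mink _ _ fu hh).differentiable (by simp) p)
    ((smooth_mink _ _ hf hu).differentiable (by simp) p), ContinuousLinearMap.add_apply,
    fderiv_mink _ _ (fu.differentiable (by simp)) (hh.differentiable (by simp)),
    fderiv_mink _ _ (hf.differentiable (by simp)) (hu.differentiable (by simp))]

lemma bilin_expand (B : (ℝ × ℝ) → (ℝ × ℝ) → ℝ) (hsym : ∀ u v, B u v = B v u)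
    (hadd : ∀ u v w, B u (v + w) = B u v + B u w) (hsmul : ∀ (c : ℝ) u v, B u (c • v) = c * B u v)
    (X Y : ℝ × ℝ) : B X Y = X.1 * Y.1 * B (1, 0) (1, 0)
      + (X.1 * Y.2 + X.2 * Y.1) * B (1, 0) (0, 1) + X.2 * Y.2 * B (0, 1) (0, 1) := by
  have hd : ∀ Z : ℝ × ℝ, Z = Z.1 • ((1, 0) : ℝ × ℝ) + Z.2 • ((0, 1) : ℝ × ℝ) := by
    intro Z; ext <;> simp
  have hexp : ∀ u Z, B u Z = Z.1 * B u (1, 0) + Z.2 * B u (0, 1) := by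
    intro u Z
    conv_lhs => rw [hd Z]
    rw [hadd, hsmul, hsmul]
  rw [hexp X Y, hsym X (1, 0), hsym X (0, 1), hexp _ X, hexp _ X, hsym (0, 1) (1, 0)]
  ring

lemma det_prod (A : ℝ × ℝ →ₗ[ℝ] ℝ × ℝ) :
    LinearMap.det A = (A (1, 0)).1 * (A (0, 1)).2 - (A (0, 1)).1 * (A (1, 0)).2 := by
  rw [← LinearMap.det_toMatrix (Module.Basis.finTwoProd ℝ), Matrix.det_fin_two]
  simp [LinearMap.toMatrix_apply]

lemma brioschi_conn (B : ℝ × ℝ → (ℝ × ℝ) → (ℝ × ℝ) → ℝ)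
    (Γ : ℝ × ℝ → (ℝ × ℝ) → (ℝ × ℝ) → ℝ × ℝ) (p : ℝ × ℝ)
    (Bexp : ∀ X Y, B p X Y = X.1 * Y.1 * B p (1, 0) (1, 0)
      + (X.1 * Y.2 + X.2 * Y.1) * B p (1, 0) (0, 1) + X.2 * Y.2 * B p (0, 1) (0, 1))
    (Γs : ∀ p u v, Γ p u v = Γ p v u)
    (Γd : ∀ p u v w, fderiv ℝ (fun q => B q u v) p w = B p (Γ p w u) v + B p u (Γ p w v))
    (hD : B p (1, 0) (1, 0) * B p (0, 1) (0, 1) - B p (1, 0) (0, 1) ^ 2 ≠ 0) :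
    brioschi (fun q => B q (1, 0) (1, 0)) (fun q => B q (1, 0) (0, 1))
      (fun q => B q (0, 1) (0, 1)) p =
    (-(1 / 2) * pd2 (pd2 (fun q => B q (1, 0) (1, 0))) p
      + pd1 (pd2 (fun q => B q (1, 0) (0, 1))) p - (1 / 2) * pd1 (pd1 (fun q => B q (0, 1) (0, 1))) p
      - (B p (Γ p (1, 0) (1, 0)) (Γ p (0, 1) (0, 1))
        - B p (Γ p (1, 0) (0, 1)) (Γ p (1, 0) (0, 1)))) /
      (B p (1, 0) (1, 0) * B p (0, 1) (0, 1) - B p (1, 0) (0, 1) ^ 2) := by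
  have hG : ∀ u v w, fderiv ℝ (fun q => B q u v) p w =
      (Γ p w u).1 * v.1 * B p (1, 0) (1, 0)
      + ((Γ p w u).1 * v.2 + (Γ p w u).2 * v.1) * B p (1, 0) (0, 1)
        + (Γ p w u).2 * v.2 * B p (0, 1) (0, 1)
      + (u.1 * (Γ p w v).1 * B p (1, 0) (1, 0)
      + (u.1 * (Γ p w v).2 + u.2 * (Γ p w v).1) * B p (1, 0) (0, 1)
        + u.2 * (Γ p w v).2 * B p (0, 1) (0, 1)) := by
    intro u v w
    rw [Γd, Bexp (Γ p w u) v, Bexp u]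
  unfold brioschi
  refine (brioschi_alg (B p (1, 0) (1, 0)) (B p (1, 0) (0, 1)) (B p (0, 1) (0, 1)) _ _ _ _ _ _ _
    (Γ p (1, 0) (1, 0)).1 (Γ p (1, 0) (1, 0)).2 (Γ p (1, 0) (0, 1)).1 (Γ p (1, 0) (0, 1)).2
    (Γ p (0, 1) (0, 1)).1 (Γ p (0, 1) (0, 1)).2 ?_ ?_ ?_ ?_ ?_ ?_ hD).trans ?_
  · simp only [pd1]; rw [hG]; ring
  · simp only [pd2]; rw [hG, Γs p (0, 1) (1, 0)]; ring
  · simp only [pd1]; rw [hG]; ring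
  · simp only [pd2]; rw [hG, Γs p (0, 1) (1, 0)]; ring
  · simp only [pd1]; rw [hG]; ring
  · simp only [pd2]; rw [hG]; ring
  · rw [Bexp (Γ p (1, 0) (1, 0)) (Γ p (0, 1) (0, 1)),
      Bexp (Γ p (1, 0) (0, 1)) (Γ p (1, 0) (0, 1))]
    ring

/-- Theorem 3.1 of the paper: for a spacelike immersion `ψ` through the
lightcone with `II_η` Riemannian, `K` and `K^η` the Gauss curvatures of the induced metric
and of `II_η`, `d = det A_η`, and `L` the difference tensor of the Levi-Civita connections,
one has `2K^η = K²/d + II_η(L,L) − (1/(4d²))·II_η(∇^{II_η}d, ∇^{II_η}d)`, where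
`II_η(L,L)` is the full `II_η`-square norm of `L` and the last term is the `II_η`-square
norm of the `II_η`-gradient of `d` (both written in the chart via the inverse matrix of
`II_η`). -/
theorem stmt18
    (ψ η : ℝ × ℝ → Fin 4 → ℝ)
    (A : ℝ × ℝ → (ℝ × ℝ →ₗ[ℝ] ℝ × ℝ))
    (hψ : ContDiff ℝ (⊤ : ℕ∞) ψ) (hη : ContDiff ℝ (⊤ : ℕ∞) η)
    (hcone : ∀ p, mink (ψ p) (ψ p) = 0 ∧ 0 < ψ p 0)
    (hspace : ∀ p v, v ≠ 0 → 0 < mink (fderiv ℝ ψ p v) (fderiv ℝ ψ p v))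
    (hηlight : ∀ p, mink (η p) (η p) = 0)
    (hψη : ∀ p, mink (ψ p) (η p) = 1)
    (hηnormal : ∀ p v, mink (η p) (fderiv ℝ ψ p v) = 0)
    (hWein : ∀ p v, fderiv ℝ η p v = -(fderiv ℝ ψ p (A p v)))
    (g II : ℝ × ℝ → (ℝ × ℝ) → (ℝ × ℝ) → ℝ)
    (hg : ∀ p u v, g p u v = mink (fderiv ℝ ψ p u) (fderiv ℝ ψ p v))
    (hII : ∀ p u v, II p u v = -(g p (A p u) v))
    (hIIpos : ∀ p v, v ≠ 0 → 0 < II p v v)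
    (Γ Γeta : ℝ × ℝ → (ℝ × ℝ) → (ℝ × ℝ) → ℝ × ℝ)
    (hΓ : IsLeviCivita g Γ) (hΓeta : IsLeviCivita II Γeta)
    (L : ℝ × ℝ → (ℝ × ℝ) → (ℝ × ℝ) → ℝ × ℝ)
    (hL : ∀ p u v, L p u v = Γeta p u v - Γ p u v)
    (d : ℝ × ℝ → ℝ) (hd : ∀ p, d p = LinearMap.det (A p))
    (K Keta : ℝ × ℝ → ℝ)
    (hK : ∀ p, K p = brioschi (fun q => g q (bse 0) (bse 0))
      (fun q => g q (bse 0) (bse 1)) (fun q => g q (bse 1) (bse 1)) p)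
    (hKeta : ∀ p, Keta p = brioschi (fun q => II q (bse 0) (bse 0))
      (fun q => II q (bse 0) (bse 1)) (fun q => II q (bse 1) (bse 1)) p) :
    ∀ p, 2 * Keta p
      = (K p) ^ 2 / d p
        + (∑ i : Fin 2, ∑ j : Fin 2, ∑ k : Fin 2, ∑ l : Fin 2,
            ((Matrix.of fun a b => II p (bse a) (bse b))⁻¹ i k) *
            ((Matrix.of fun a b => II p (bse a) (bse b))⁻¹ j l) *
            II p (L p (bse i) (bse j)) (L p (bse k) (bse l)))
        - (1 / (4 * (d p) ^ 2)) *
          (∑ i : Fin 2, ∑ j : Fin 2,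
            ((Matrix.of fun a b => II p (bse a) (bse b))⁻¹ i j) *
            (fderiv ℝ d p (bse i)) * (fderiv ℝ d p (bse j))) := by
  intro p
  have dψ : ∀ u, ContDiff ℝ (⊤ : ℕ∞) (fun q => fderiv ℝ ψ q u) := smooth_dir ψ hψ
  have dη : ∀ u, ContDiff ℝ (⊤ : ℕ∞) (fun q => fderiv ℝ η q u) := smooth_dir η hη
  have diff : ∀ {f : ℝ × ℝ → Fin 4 → ℝ}, ContDiff ℝ (⊤ : ℕ∞) f → Differentiable ℝ f :=
    fun h => h.differentiable (by simp)
  have hIIη : ∀ q u v, II q u v = mink (fderiv ℝ η q u) (fderiv ℝ ψ q v) := by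
    intro q u v
    rw [hII, hg, hWein, mink_comm' (-_), mink_neg', mink_comm']
  have gsym : ∀ q u v, g q u v = g q v u := by
    intro q u v; rw [hg, hg, mink_comm']
  have gexp : ∀ q X Y, g q X Y = X.1 * Y.1 * g q (1, 0) (1, 0)
      + (X.1 * Y.2 + X.2 * Y.1) * g q (1, 0) (0, 1) + X.2 * Y.2 * g q (0, 1) (0, 1) := by
    intro q
    apply bilin_expand _ (gsym q)
    · intro u v w; simp only [hg, map_add, mink_add']
    · intro c u v; simp only [hg, map_smul, mink_smul']
  have o1 : ∀ q u, mink (ψ q) (fderiv ℝ ψ q u) = 0 := by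
    intro q u
    have h := fderiv_mink ψ ψ (diff hψ) (diff hψ) q u
    have h0 : (fun q => mink (ψ q) (ψ q)) = fun _ => (0 : ℝ) := by
      funext q; exact (hcone q).1
    rw [h0, mink_comm' (fderiv ℝ ψ q u)] at h
    simp at h
    linarith
  have o2 : ∀ q u, mink (η q) (fderiv ℝ η q u) = 0 := by
    intro q u
    rw [hWein, mink_neg', hηnormal, neg_zero]
  have o3 : ∀ q u, mink (ψ q) (fderiv ℝ η q u) = 0 := by
    intro q u
    rw [hWein, mink_neg', o1, neg_zero]
  have s1 : ∀ q u v, mink (ψ q) (fderiv ℝ (fun q => fderiv ℝ ψ q u) q v) = - g q u v := by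
    intro q u v
    have h := fderiv_mink ψ _ (diff hψ) (diff (dψ u)) q v
    have h0 : (fun q => mink (ψ q) (fderiv ℝ ψ q u)) = fun _ => (0 : ℝ) := by
      funext q; exact o1 q u
    rw [h0, ← hg, gsym] at h
    simp at h
    linarith
  have s2 : ∀ q u v, mink (η q) (fderiv ℝ (fun q => fderiv ℝ ψ q u) q v) = - II q v u := by
    intro q u v
    have h := fderiv_mink η _ (diff hη) (diff (dψ u)) q v
    have h0 : (fun q => mink (η q) (fderiv ℝ ψ q u)) = fun _ => (0 : ℝ) := by
      funext q; exact hηnormal q u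
    rw [h0, ← hIIη] at h
    simp at h
    linarith
  have s3 : ∀ q u v, mink (ψ q) (fderiv ℝ (fun q => fderiv ℝ η q u) q v) = - II q u v := by
    intro q u v
    have h := fderiv_mink ψ _ (diff hψ) (diff (dη u)) q v
    have h0 : (fun q => mink (ψ q) (fderiv ℝ η q u)) = fun _ => (0 : ℝ) := by
      funext q; exact o3 q u
    rw [h0, mink_comm' (fderiv ℝ ψ q v), ← hIIη] at h
    simp at h
    linarith
  have IIsym : ∀ q u v, II q u v = II q v u := by
    intro q u v
    have h1 := s2 q u v
    have h2 := s2 q v u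
    rw [dir_symm ψ hψ] at h1
    linarith
  have IIadd : ∀ q u v w, II q u (v + w) = II q u v + II q u w := by
    intro q u v w; simp only [hIIη, map_add, mink_add']
  have IIsmul : ∀ q (c : ℝ) u v, II q u (c • v) = c * II q u v := by
    intro q c u v; simp only [hIIη, map_smul, mink_smul']
  have IIexp : ∀ q X Y, II q X Y = X.1 * Y.1 * II q (1, 0) (1, 0)
      + (X.1 * Y.2 + X.2 * Y.1) * II q (1, 0) (0, 1) + X.2 * Y.2 * II q (0, 1) (0, 1) :=
    fun q => bilin_expand _ (IIsym q) (IIadd q) (IIsmul q)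
  have s4 : ∀ q u v, mink (η q) (fderiv ℝ (fun q => fderiv ℝ η q u) q v) = II q v (A q u) := by
    intro q u v
    have h := fderiv_mink η _ (diff hη) (diff (dη u)) q v
    have h0 : (fun q => mink (η q) (fderiv ℝ η q u)) = fun _ => (0 : ℝ) := by
      funext q; exact o2 q u
    rw [h0, hWein q u, mink_neg', ← hIIη] at h
    simp at h
    linarith
  have gpos : ∀ q, 0 < g q (1, 0) (1, 0) * g q (0, 1) (0, 1) - g q (1, 0) (0, 1) ^ 2 := by
    intro q
    have hE : 0 < g q (1, 0) (1, 0) := by rw [hg]; exact hspace q _ (by simp)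
    have hw := hspace q (-g q (1, 0) (0, 1), g q (1, 0) (1, 0)) (by
      intro h; rw [Prod.mk_eq_zero] at h; exact hE.ne' h.2)
    rw [← hg, gexp] at hw
    simp only at hw
    have : 0 < g q (1, 0) (1, 0) *
        (g q (1, 0) (1, 0) * g q (0, 1) (0, 1) - g q (1, 0) (0, 1) ^ 2) := by linarith
    exact (mul_pos_iff_of_pos_left hE).1 this
  have hepos : ∀ q, 0 < II q (1, 0) (1, 0) := fun q => hIIpos q _ (by simp)
  have IIpos : ∀ q, 0 < II q (1, 0) (1, 0) * II q (0, 1) (0, 1) - II q (1, 0) (0, 1) ^ 2 := by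
    intro q
    have hE := hepos q
    have hw := hIIpos q (-II q (1, 0) (0, 1), II q (1, 0) (1, 0)) (by
      intro h; rw [Prod.mk_eq_zero] at h; exact hE.ne' h.2)
    rw [IIexp] at hw
    simp only at hw
    have : 0 < II q (1, 0) (1, 0) *
        (II q (1, 0) (1, 0) * II q (0, 1) (0, 1) - II q (1, 0) (0, 1) ^ 2) := by linarith
    exact (mul_pos_iff_of_pos_left hE).1 this
  obtain ⟨Γs, -, -, Γd⟩ := hΓ
  obtain ⟨Hs, -, -, Hd⟩ := hΓeta
  have dg : ∀ u v w, fderiv ℝ (fun q => g q u v) p w =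
      mink (fderiv ℝ (fun q => fderiv ℝ ψ q u) p w) (fderiv ℝ ψ p v)
      + mink (fderiv ℝ (fun q => fderiv ℝ ψ q v) p w) (fderiv ℝ ψ p u) := by
    intro u v w
    have h0 : (fun q => g q u v) = fun q => mink (fderiv ℝ ψ q u) (fderiv ℝ ψ q v) := by
      funext q; exact hg q u v
    rw [h0, fderiv_mink _ _ (diff (dψ u)) (diff (dψ v)), mink_comm' (fderiv ℝ ψ p u)]
  have dII : ∀ u v w, fderiv ℝ (fun q => II q u v) p w =
      mink (fderiv ℝ (fun q => fderiv ℝ η q u) p w) (fderiv ℝ ψ p v)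
      + mink (fderiv ℝ η p u) (fderiv ℝ (fun q => fderiv ℝ ψ q v) p w) := by
    intro u v w
    have h0 : (fun q => II q u v) = fun q => mink (fderiv ℝ η q u) (fderiv ℝ ψ q v) := by
      funext q; exact hIIη q u v
    rw [h0, fderiv_mink _ _ (diff (dη u)) (diff (dψ v))]
  have tang : ∀ u v w, mink (fderiv ℝ (fun q => fderiv ℝ ψ q u) p v) (fderiv ℝ ψ p w)
      = g p (Γ p u v) w := by
    intro u v w
    have k : ∀ u v w, mink (fderiv ℝ (fun q => fderiv ℝ ψ q u) p w) (fderiv ℝ ψ p v)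
        + mink (fderiv ℝ (fun q => fderiv ℝ ψ q v) p w) (fderiv ℝ ψ p u)
        = g p (Γ p u w) v + g p (Γ p v w) u := by
      intro u v w
      rw [← dg, Γd, Γs p w u, Γs p w v, gsym p u]
    have k1 := k u v w
    have k2 := k v w u
    have k3 := k w u v
    rw [dir_symm ψ hψ v u, dir_symm ψ hψ w u, Γs p v u, Γs p w u] at k2
    rw [dir_symm ψ hψ w v, Γs p w v] at k3
    linarith
  have gauss : ∀ u v, fderiv ℝ (fun q => fderiv ℝ ψ q u) p v
      = fderiv ℝ ψ p (Γ p u v) - II p u v • ψ p - g p u v • η p := by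
    intro u v
    rw [← sub_eq_zero]
    have c1 : ∀ w, mink (fderiv ℝ ψ p w) (ψ p) = 0 := fun w => by rw [mink_comm', o1]
    have c2 : ∀ w, mink (fderiv ℝ ψ p w) (η p) = 0 := fun w => by rw [mink_comm', hηnormal]
    apply mink_frame (fderiv ℝ ψ p (1, 0)) (fderiv ℝ ψ p (0, 1)) (ψ p) (η p) _ _ _
      (hg p _ _).symm (hg p _ _).symm (hg p _ _).symm (gpos p).ne' (hcone p).1 (hψη p)
      (hηlight p) (o1 p _) (o1 p _) (hηnormal p _) (hηnormal p _)
    · rw [mink_sub', mink_sub', mink_sub', mink_smul', mink_smul', c1, c2, mink_comm', tang,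
        ← hg, gsym p (1, 0)]
      ring
    · rw [mink_sub', mink_sub', mink_sub', mink_smul', mink_smul', c1, c2, mink_comm', tang,
        ← hg, gsym p (0, 1)]
      ring
    · rw [mink_sub', mink_sub', mink_sub', mink_smul', mink_smul', o1, (hcone p).1, hψη, s1]
      ring
    · rw [mink_sub', mink_sub', mink_sub', mink_smul', mink_smul', hηnormal, hηlight,
        mink_comm' (η p) (ψ p), hψη, s2, IIsym p v u]
      ring
  have mg : ∀ w u v, mink w (fderiv ℝ (fun q => fderiv ℝ ψ q u) p v)
      = mink w (fderiv ℝ ψ p (Γ p u v)) - II p u v * mink (ψ p) w - g p u v * mink (η p) w := by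
    intro w u v
    rw [gauss, mink_sub', mink_sub', mink_smul', mink_smul', mink_comm' w (ψ p),
      mink_comm' w (η p)]
  have LΓ : ∀ u v, Γeta p u v = Γ p u v + L p u v := by
    intro u v; rw [hL]; abel
  have q0 : ∀ u v w, mink (fderiv ℝ (fun q => fderiv ℝ η q u) p v) (fderiv ℝ ψ p w)
      = II p (Γeta p u v) w + II p u (L p v w) := by
    intro u v w
    have h := dII u w v
    rw [mg, o3, o2, Γs p w v, ← hIIη, Hd, Hs p v u, LΓ v w, IIadd] at h
    linarith
  have Lsym : ∀ u v, L p u v = L p v u := by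
    intro u v; rw [hL, hL, Γs, Hs]
  have cod : ∀ u v w, II p u (L p v w) = II p v (L p u w) := by
    intro u v w
    have h1 := q0 u v w
    have h2 := q0 v u w
    rw [dir_symm η hη, Hs p u v] at h1
    linarith
  have q1 : ∀ u v w, mink (fderiv ℝ (fun q => fderiv ℝ η q u) p v) (fderiv ℝ ψ p w)
      = II p (Γeta p u v) w + II p (L p u v) w := by
    intro u v w
    rw [q0, IIsym p (L p u v) w, cod w u v, Lsym v w]
  have nn : ∀ u v x y, mink (fderiv ℝ (fun q => fderiv ℝ η q u) p v)
      (fderiv ℝ (fun q => fderiv ℝ ψ q x) p y) = II p (Γeta p u v) (Γ p x y)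
        + II p (L p u v) (Γ p x y) + II p x y * II p u v - g p x y * II p v (A p u) := by
    intro u v x y
    rw [mg, q1, s3, s4]; ring
  have mm : ∀ u v x y, mink (fderiv ℝ (fun q => fderiv ℝ ψ q u) p v)
      (fderiv ℝ (fun q => fderiv ℝ ψ q x) p y) = g p (Γ p u v) (Γ p x y)
        + II p x y * g p u v + g p x y * II p u v := by
    intro u v x y
    rw [mg, tang, s1, s2, IIsym p v u]; ring
  have third : ∀ f : ℝ × ℝ → Fin 4 → ℝ, ContDiff ℝ (⊤ : ℕ∞) f → ∀ a b c,
      fderiv ℝ (fun q => fderiv ℝ (fun r => fderiv ℝ f r a) q b) p c =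
      fderiv ℝ (fun q => fderiv ℝ (fun r => fderiv ℝ f r b) q a) p c := by
    intro f hf a b c
    have : (fun q => fderiv ℝ (fun r => fderiv ℝ f r a) q b) =
      (fun q => fderiv ℝ (fun r => fderiv ℝ f r b) q a) := by
      funext q; exact dir_symm f hf a b q
    rw [this]
  have third' : ∀ f : ℝ × ℝ → Fin 4 → ℝ, ContDiff ℝ (⊤ : ℕ∞) f → ∀ a b c,
      fderiv ℝ (fun q => fderiv ℝ (fun r => fderiv ℝ f r a) q b) p c =
      fderiv ℝ (fun q => fderiv ℝ (fun r => fderiv ℝ f r a) q c) p b := by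
    intro f hf a b c
    exact dir_symm _ (smooth_dir f hf a) b c p
  have ddg : ∀ u v a b, fderiv ℝ (fun q => fderiv ℝ (fun r => g r u v) q a) p b =
      mink (fderiv ℝ (fun q => fderiv ℝ (fun r => fderiv ℝ ψ r u) q a) p b) (fderiv ℝ ψ p v)
      + mink (fderiv ℝ (fun r => fderiv ℝ ψ r u) p a) (fderiv ℝ (fun r => fderiv ℝ ψ r v) p b)
      + (mink (fderiv ℝ (fun r => fderiv ℝ ψ r u) p b) (fderiv ℝ (fun r => fderiv ℝ ψ r v) p a)
      + mink (fderiv ℝ ψ p u)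
        (fderiv ℝ (fun q => fderiv ℝ (fun r => fderiv ℝ ψ r v) q a) p b)) := by
    intro u v a b
    have h0 : (fun q => g q u v) = fun q => mink (fderiv ℝ ψ q u) (fderiv ℝ ψ q v) := by
      funext q; exact hg q u v
    rw [h0]
    exact fderiv2_mink _ _ (dψ u) (dψ v) p a b
  have ddII : ∀ u v a b, fderiv ℝ (fun q => fderiv ℝ (fun r => II r u v) q a) p b =
      mink (fderiv ℝ (fun q => fderiv ℝ (fun r => fderiv ℝ η r u) q a) p b) (fderiv ℝ ψ p v)
      + mink (fderiv ℝ (fun r => fderiv ℝ η r u) p a) (fderiv ℝ (fun r => fderiv ℝ ψ r v) p b)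
      + (mink (fderiv ℝ (fun r => fderiv ℝ η r u) p b) (fderiv ℝ (fun r => fderiv ℝ ψ r v) p a)
      + mink (fderiv ℝ η p u)
        (fderiv ℝ (fun q => fderiv ℝ (fun r => fderiv ℝ ψ r v) q a) p b)) := by
    intro u v a b
    have h0 : (fun q => II q u v) = fun q => mink (fderiv ℝ η q u) (fderiv ℝ ψ q v) := by
      funext q; exact hIIη q u v
    rw [h0]
    exact fderiv2_mink _ _ (dη u) (dψ v) p a b
  have Ng : -(1 / 2) * pd2 (pd2 (fun q => g q (1, 0) (1, 0))) p
      + pd1 (pd2 (fun q => g q (1, 0) (0, 1))) p - (1 / 2) * pd1 (pd1 (fun q => g q (0, 1) (0, 1))) p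
      = mink (fderiv ℝ (fun q => fderiv ℝ ψ q (1, 0)) p (1, 0))
          (fderiv ℝ (fun q => fderiv ℝ ψ q (0, 1)) p (0, 1))
        - mink (fderiv ℝ (fun q => fderiv ℝ ψ q (1, 0)) p (0, 1))
          (fderiv ℝ (fun q => fderiv ℝ ψ q (1, 0)) p (0, 1)) := by
    have h1 := ddg (1, 0) (1, 0) (0, 1) (0, 1)
    have h2 := ddg (1, 0) (0, 1) (0, 1) (1, 0)
    have h3 := ddg (0, 1) (0, 1) (1, 0) (1, 0)
    rw [third ψ hψ (1, 0) (0, 1) (1, 0), third' ψ hψ (0, 1) (0, 1) (1, 0),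
      third ψ hψ (0, 1) (1, 0) (0, 1), dir_symm ψ hψ (0, 1) (1, 0)] at h2
    rw [dir_symm ψ hψ (0, 1) (1, 0)] at h3
    simp only [mink_comm' (fderiv ℝ ψ p _) _] at h1 h2 h3
    unfold pd1 pd2
    rw [h1, h2, h3]
    ring
  have NII : -(1 / 2) * pd2 (pd2 (fun q => II q (1, 0) (1, 0))) p
      + pd1 (pd2 (fun q => II q (1, 0) (0, 1))) p
      - (1 / 2) * pd1 (pd1 (fun q => II q (0, 1) (0, 1))) p
      = (1 / 2) * (mink (fderiv ℝ (fun q => fderiv ℝ η q (1, 0)) p (1, 0))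
          (fderiv ℝ (fun q => fderiv ℝ ψ q (0, 1)) p (0, 1))
        + mink (fderiv ℝ (fun q => fderiv ℝ η q (0, 1)) p (0, 1))
          (fderiv ℝ (fun q => fderiv ℝ ψ q (1, 0)) p (1, 0))
        - 2 * mink (fderiv ℝ (fun q => fderiv ℝ η q (1, 0)) p (0, 1))
          (fderiv ℝ (fun q => fderiv ℝ ψ q (1, 0)) p (0, 1))) := by
    have h1 := ddII (1, 0) (1, 0) (0, 1) (0, 1)
    have h2 := ddII (1, 0) (0, 1) (0, 1) (1, 0)
    have h2' := ddII (0, 1) (1, 0) (0, 1) (1, 0)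
    have h3 := ddII (0, 1) (0, 1) (1, 0) (1, 0)
    have hsy : (fun q => II q (0, 1) (1, 0)) = fun q => II q (1, 0) (0, 1) := by
      funext q; exact IIsym q _ _
    rw [hsy] at h2'
    rw [third η hη (1, 0) (0, 1) (1, 0), third' ψ hψ (0, 1) (0, 1) (1, 0),
      third ψ hψ (0, 1) (1, 0) (0, 1), dir_symm ψ hψ (0, 1) (1, 0)] at h2
    rw [third' η hη (0, 1) (0, 1) (1, 0), third η hη (0, 1) (1, 0) (0, 1),
      third ψ hψ (1, 0) (0, 1) (1, 0), dir_symm η hη (0, 1) (1, 0)] at h2'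
    rw [dir_symm ψ hψ (0, 1) (1, 0), dir_symm η hη (0, 1) (1, 0)] at h3
    unfold pd1 pd2
    linarith
  rw [mm, mm] at Ng
  rw [nn, nn, nn] at NII
  have dsm : ∀ u v, DifferentiableAt ℝ (fun q => g q u v) p := by
    intro u v
    have h0 : (fun q => g q u v) = fun q => mink (fderiv ℝ ψ q u) (fderiv ℝ ψ q v) := by
      funext q; exact hg q u v
    rw [h0]
    exact (smooth_mink _ _ (dψ u) (dψ v)).differentiable (by simp) p
  have dsmII : ∀ u v, DifferentiableAt ℝ (fun q => II q u v) p := by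
    intro u v
    have h0 : (fun q => II q u v) = fun q => mink (fderiv ℝ η q u) (fderiv ℝ ψ q v) := by
      funext q; exact hIIη q u v
    rw [h0]
    exact (smooth_mink _ _ (dη u) (dψ v)).differentiable (by simp) p
  have IIA : ∀ q u v, II q u v = -((A q u).1 * v.1 * g q (1, 0) (1, 0)
      + ((A q u).1 * v.2 + (A q u).2 * v.1) * g q (1, 0) (0, 1)
      + (A q u).2 * v.2 * g q (0, 1) (0, 1)) := by
    intro q u v
    rw [hII, gexp]
  have hdW : ∀ q, d q * (g q (1, 0) (1, 0) * g q (0, 1) (0, 1) - g q (1, 0) (0, 1) ^ 2)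
      = II q (1, 0) (1, 0) * II q (0, 1) (0, 1) - II q (1, 0) (0, 1) ^ 2 := by
    intro q
    rw [hd, det_prod]
    have h1 := IIA q (1, 0) (1, 0)
    have h2 := IIA q (1, 0) (0, 1)
    have h3 := IIA q (0, 1) (1, 0)
    have h4 := IIA q (0, 1) (0, 1)
    rw [pow_two (II q (1, 0) (0, 1))]
    nth_rewrite 2 [← IIsym q (0, 1) (1, 0)]
    rw [h1, h2, h3, h4]
    simp only
    ring
  have hd' : d = fun q => (II q (1, 0) (1, 0) * II q (0, 1) (0, 1) - II q (1, 0) (0, 1) ^ 2)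
      / (g q (1, 0) (1, 0) * g q (0, 1) (0, 1) - g q (1, 0) (0, 1) ^ 2) := by
    funext q
    rw [eq_div_iff (gpos q).ne', hdW]
  have ddiff : DifferentiableAt ℝ d p := by
    rw [hd']
    have v1 := dsmII (1, 0) (1, 0)
    have v2 := dsmII (1, 0) (0, 1)
    have v3 := dsmII (0, 1) (0, 1)
    have w1 := dsm (1, 0) (1, 0)
    have w2 := dsm (1, 0) (0, 1)
    have w3 := dsm (0, 1) (0, 1)
    have hVd := (v1.fun_mul v3).fun_sub (v2.fun_pow 2)
    have hWd := (w1.fun_mul w3).fun_sub (w2.fun_pow 2)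
    have hq := hVd.fun_mul (hWd.fun_inv (gpos p).ne')
    simpa only [div_eq_mul_inv] using hq
  have hdd : ∀ v, fderiv ℝ d p v = 2 * d p * ((L p v (1, 0)).1 + (L p v (0, 1)).2) := by
    intro v
    have hW := ((dsm (1, 0) (1, 0)).hasFDerivAt.mul (dsm (0, 1) (0, 1)).hasFDerivAt).sub
      ((dsm (1, 0) (0, 1)).hasFDerivAt.mul (dsm (1, 0) (0, 1)).hasFDerivAt)
    have hV := ((dsmII (1, 0) (1, 0)).hasFDerivAt.mul (dsmII (0, 1) (0, 1)).hasFDerivAt).sub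
      ((dsmII (1, 0) (0, 1)).hasFDerivAt.mul (dsmII (1, 0) (0, 1)).hasFDerivAt)
    have hP := ddiff.hasFDerivAt.mul hW
    have heq := hP.unique (hV.congr_of_eventuallyEq (Filter.Eventually.of_forall (fun q => by
      have := hdW q
      simp only [Pi.mul_apply, Pi.sub_apply]
      linarith)))
    have h2 := congrArg (fun T => T v) heq
    simp only [ContinuousLinearMap.add_apply, ContinuousLinearMap.sub_apply,
      ContinuousLinearMap.smul_apply, smul_eq_mul, Γd, Hd, LΓ, Pi.sub_apply, Pi.mul_apply] at h2
    simp only [gexp p (Γ p _ _), gexp p _ (Γ p _ _), IIexp p (_ + _), IIexp p _ (_ + _),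
      Prod.fst_add, Prod.snd_add] at h2
    have hw := hdW p
    have hwn := (gpos p).ne'
    apply mul_right_cancel₀ hwn
    generalize fderiv ℝ d p v = dv at *
    linear_combination h2 - 2 * ((L p v (1, 0)).1 + (L p v (0, 1)).2
      + (Γ p v (1, 0)).1 + (Γ p v (0, 1)).2) * hw
  have b0 : bse 0 = (1, 0) := rfl
  have b1 : bse 1 = (0, 1) := rfl
  have hWp := (gpos p).ne'
  have hDp := (IIpos p).ne'
  have hKp := hK p
  have hKep := hKeta p
  rw [b0, b1, brioschi_conn g Γ p (gexp p) Γs Γd hWp, Ng, eq_div_iff hWp] at hKp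
  rw [b0, b1, brioschi_conn II Γeta p (IIexp p) Hs Hd hDp, NII, eq_div_iff hDp] at hKep
  have t1 := IIA p (1, 0) (1, 0)
  have t2 := IIA p (1, 0) (0, 1)
  have t3 := IIA p (0, 1) (1, 0)
  have t4 := IIA p (0, 1) (0, 1)
  rw [IIsym p (0, 1) (1, 0)] at t3
  simp only [mul_one, mul_zero, add_zero, zero_add] at t1 t2 t3 t4
  have hKtr : K p = -((A p (1, 0)).1 + (A p (0, 1)).2) := by
    apply mul_right_cancel₀ hWp
    linear_combination hKp + g p (0, 1) (0, 1) * t1 + g p (1, 0) (1, 0) * t4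
      - g p (1, 0) (0, 1) * (t2 + t3)
  have hKeD : 2 * (Keta p * (II p (1, 0) (1, 0) * II p (0, 1) (0, 1) - II p (1, 0) (0, 1) ^ 2))
      = 2 * (II p (L p (1, 0) (0, 1)) (L p (1, 0) (0, 1))
        - II p (L p (1, 0) (1, 0)) (L p (0, 1) (0, 1)))
      + K p ^ 2 * (g p (1, 0) (1, 0) * g p (0, 1) (0, 1) - g p (1, 0) (0, 1) ^ 2) := by
    have hX : 2 * (II p (1, 0) (1, 0) * II p (0, 1) (0, 1) - II p (1, 0) (0, 1) ^ 2)
        - g p (0, 1) (0, 1) * II p (1, 0) (A p (1, 0))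
        - g p (1, 0) (1, 0) * II p (0, 1) (A p (0, 1))
        + 2 * g p (1, 0) (0, 1) * II p (0, 1) (A p (1, 0))
        = K p ^ 2 * (g p (1, 0) (1, 0) * g p (0, 1) (0, 1) - g p (1, 0) (0, 1) ^ 2) := by
      have hdp := hdW p
      rw [hd, det_prod] at hdp
      rw [IIexp p (1, 0) (A p (1, 0)), IIexp p (0, 1) (A p (0, 1)), IIexp p (0, 1) (A p (1, 0)),
        hKtr, ← hdp]
      simp only [mul_one, mul_zero, add_zero, zero_add, one_mul, zero_mul]
      generalize g p (1, 0) (1, 0) = E at *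
      generalize g p (1, 0) (0, 1) = F at *
      generalize g p (0, 1) (0, 1) = G at *
      generalize II p (1, 0) (1, 0) = e at *
      generalize II p (1, 0) (0, 1) = f at *
      generalize II p (0, 1) (0, 1) = h at *
      linear_combination (-G * (A p (1, 0)).1) * t1 + (-G * (A p (1, 0)).2) * t2
        + (-E * (A p (0, 1)).1) * t3 + (-E * (A p (0, 1)).2) * t4
        + (2 * F * (A p (1, 0)).1) * t3 + (2 * F * (A p (1, 0)).2) * t4
        + ((A p (1, 0)).1 * F + (A p (1, 0)).2 * G - (A p (0, 1)).1 * E - (A p (0, 1)).2 * F)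
          * (t2 - t3)
    rw [hKep, ← hX]
    simp only [LΓ]
    rw [IIexp p (Γ p (1, 0) (1, 0) + _) (Γ p (0, 1) (0, 1) + _),
      IIexp p (Γ p (1, 0) (0, 1) + _) (Γ p (1, 0) (0, 1) + _)]
    rw [IIexp p (Γ p (1, 0) (1, 0) + _) _, IIexp p (Γ p (0, 1) (0, 1) + _) _,
      IIexp p (Γ p (1, 0) (0, 1) + _) _]
    rw [IIexp p (L p (1, 0) (1, 0)) (Γ p (0, 1) (0, 1)),
      IIexp p (L p (0, 1) (0, 1)) (Γ p (1, 0) (1, 0)),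
      IIexp p (L p (1, 0) (0, 1)) (Γ p (1, 0) (0, 1)),
      IIexp p (L p (1, 0) (0, 1)) (L p (1, 0) (0, 1)),
      IIexp p (L p (1, 0) (1, 0)) (L p (0, 1) (0, 1))]
    simp only [Prod.fst_add, Prod.snd_add]
    ring
  have k1 := cod (1, 0) (0, 1) (1, 0)
  have k2 := cod (1, 0) (0, 1) (0, 1)
  rw [Lsym (0, 1) (1, 0), IIexp p _ (L p _ _), IIexp p _ (L p (1, 0) (1, 0))] at k1
  rw [IIexp p _ (L p _ _), IIexp p _ (L p (1, 0) (0, 1))] at k2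
  simp only [mul_one, mul_zero, add_zero, zero_add, one_mul, zero_mul] at k1 k2
  have fin := final_alg (II p (1, 0) (1, 0)) (II p (1, 0) (0, 1)) (II p (0, 1) (0, 1))
    (L p (1, 0) (1, 0)).1 (L p (1, 0) (1, 0)).2 (L p (1, 0) (0, 1)).1 (L p (1, 0) (0, 1)).2
    (L p (0, 1) (0, 1)).1 (L p (0, 1) (0, 1)).2 (hepos p).ne' hDp (by linarith) (by linarith)
  have hinv : (Matrix.of fun a b => II p (bse a) (bse b))⁻¹ =
      (II p (1, 0) (1, 0) * II p (0, 1) (0, 1) - II p (1, 0) (0, 1) ^ 2)⁻¹ •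
        !![II p (0, 1) (0, 1), -II p (1, 0) (0, 1); -II p (1, 0) (0, 1), II p (1, 0) (1, 0)] := by
    have hM : (Matrix.of fun a b => II p (bse a) (bse b)) =
        !![II p (1, 0) (1, 0), II p (1, 0) (0, 1); II p (1, 0) (0, 1), II p (0, 1) (0, 1)] := by
      ext i j
      fin_cases i <;> fin_cases j <;> simp [b0, b1, IIsym p (0, 1) (1, 0)]
    rw [hM, Matrix.inv_def, Matrix.adjugate_fin_two, Matrix.det_fin_two, Ring.inverse_eq_inv']
    simp [pow_two]
  have hdn : d p ≠ 0 := by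
    intro h0
    have := hdW p
    rw [h0, zero_mul] at this
    exact hDp this.symm
  rw [hinv]
  simp only [Fin.sum_univ_two, b0, b1, hdd, Lsym (0, 1) (1, 0), Matrix.smul_apply, smul_eq_mul,
    Matrix.of_apply, Matrix.cons_val', Matrix.cons_val_zero, Matrix.cons_val_one,
    Matrix.cons_val_fin_one]
  have hKd : K p ^ 2 / d p = K p ^ 2 *
      (g p (1, 0) (1, 0) * g p (0, 1) (0, 1) - g p (1, 0) (0, 1) ^ 2) /
      (II p (1, 0) (1, 0) * II p (0, 1) (0, 1) - II p (1, 0) (0, 1) ^ 2) := by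
    rw [← hdW p]
    field_simp
  rw [hKd]
  simp only [IIexp p (L p _ _) (L p _ _)] at hKeD ⊢
  generalize II p (1, 0) (1, 0) * II p (0, 1) (0, 1) - II p (1, 0) (0, 1) ^ 2 = D at *
  generalize K p ^ 2 * (g p (1, 0) (1, 0) * g p (0, 1) (0, 1) - g p (1, 0) (0, 1) ^ 2) = W at *
  have hKe : 2 * Keta p = (2 * (Keta p * D)) / D := by field_simp
  rw [hKe, hKeD]
  field_simp
  linear_combination 4 * fin
end
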